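/- Let D be a positive natural number, α, σ : ℝ → ℝ smooth with α(t) > 0 and σ(t) > 0 for all t, λ(t) = log(α(t)²/σ(t)²), f(t) = (d/dt) log α(t), g(t)² = -λ'(t)·σ(t)². Let p : ℝ → ℝ^D → ℝ be smooth and everywhere positive, satisfying the linear-drift Fokker–Planck equation ∂_t p(t,x) = -div_x(f(t)·x·p(t,x)) + (1/2)·g(t)²·Δ_x p(t,x) for all t and x. If x : ℝ → ℝ^D is a differentiable curve satisfying the probability-flow ODE x'(t) = f(t)·x(t) - (1/2)·g(t)²·∇_x log p(t, x(t)) for all t, then for all t: (d/dt) log p(t, x(t)) = -D·f(t) + (1/2)·g(t)²·Δ_x log p(t, x(t)). -/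

import Mathlib

open scoped BigOperators RealInnerProductSpace
open MeasureTheory

/-- Divergence of a vector field on `EuclideanSpace ℝ (Fin D)`. -/
noncomputable def divg {D : ℕ} (F : EuclideanSpace ℝ (Fin D) → EuclideanSpace ℝ (Fin D))
    (x : EuclideanSpace ℝ (Fin D)) : ℝ :=
  ∑ i, fderiv ℝ F x (EuclideanSpace.single i 1) i

/-- Laplacian of a scalar field on `EuclideanSpace ℝ (Fin D)`. -/
noncomputable def lap {D : ℕ} (f : EuclideanSpace ℝ (Fin D) → ℝ)
    (x : EuclideanSpace ℝ (Fin D)) : ℝ :=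
  divg (gradient f) x

/-!
The flux of the velocity `v = b - (g² / 2) ∇ log p` is `p v = p b - (g² / 2) ∇ p`, because
`p ∇ log p = ∇ p`. The Fokker–Planck equation with drift `b` is therefore the continuity equation
`∂ₜ p = -div (p v)`. Along an integral curve of `v` the transport term `⟨∇ p, v⟩` of `div (p v)`
cancels the spatial part of the total derivative of `p`, so `(d/dt) log p = -div v`. It remains to
take the divergence of `v` for the linear drift `b x = f x`.
-/

section Calculus

open InnerProductSpace

theorem hasDerivAt_curve_of_differentiableAt_uncurry {𝕜 E F : Type*} [NontriviallyNormedField 𝕜]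
    [NormedAddCommGroup E] [NormedSpace 𝕜 E] [NormedAddCommGroup F] [NormedSpace 𝕜 F]
    {p : 𝕜 → E → F} {x : 𝕜 → E} {x' : E} {t : 𝕜}
    (hp : DifferentiableAt 𝕜 (fun q : 𝕜 × E => p q.1 q.2) (t, x t)) (hx : HasDerivAt x x' t) :
    HasDerivAt (fun τ => p τ (x τ))
      (deriv (fun τ => p τ (x t)) t + fderiv 𝕜 (p t) (x t) x') t := by
  set L := fderiv 𝕜 (fun q : 𝕜 × E => p q.1 q.2) (t, x t)
  have hL : HasFDerivAt (fun q : 𝕜 × E => p q.1 q.2) L (t, x t) := hp.hasFDerivAt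
  have time_deriv : deriv (fun τ => p τ (x t)) t = L (1, 0) :=
    (hL.comp_hasDerivAt (f := fun τ => (τ, x t)) t
      ((hasDerivAt_id t).prodMk (hasDerivAt_const t (x t)))).deriv
  have space_deriv : fderiv 𝕜 (p t) (x t) = L.comp (.inr 𝕜 𝕜 E) :=
    (hL.comp (f := fun y => (t, y)) (x t) (hasFDerivAt_prodMk_right t (x t))).fderiv
  have total_deriv : HasDerivAt (fun τ => p τ (x τ)) (L (1, x')) t :=
    hL.comp_hasDerivAt (f := fun τ => (τ, x τ)) t ((hasDerivAt_id t).prodMk hx)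
  have split : L (1, x') = L (1, 0) + L (0, x') := by
    rw [← map_add, Prod.mk_add_mk, add_zero, zero_add]
  rw [time_deriv, space_deriv]
  exact split ▸ total_deriv

variable {E : Type*} [NormedAddCommGroup E] [InnerProductSpace ℝ E] [CompleteSpace E]
  {q : E → ℝ} {x : E}

theorem differentiableAt_gradient (hq : ContDiffAt ℝ 2 q x) :
    DifferentiableAt ℝ (gradient q) x :=
  (toDual ℝ E).symm.toContinuousLinearEquiv.differentiableAt.comp x
    ((hq.fderiv_right (m := 1) (by norm_num)).differentiableAt one_ne_zero)

theorem smul_gradient_log (hq : DifferentiableAt ℝ q x) (hx : q x ≠ 0) :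
    q x • gradient (fun y => Real.log (q y)) x = gradient q x := by
  rw [gradient, gradient, fderiv.log hq hx, map_smul, smul_inv_smul₀ hx]

end Calculus

section Divergence

variable {D : ℕ} {V W : EuclideanSpace ℝ (Fin D) → EuclideanSpace ℝ (Fin D)}
  {x : EuclideanSpace ℝ (Fin D)}

theorem divg_congr_of_eventuallyEq (h : V =ᶠ[nhds x] W) : divg V x = divg W x := by
  rw [divg, divg, h.fderiv_eq]

theorem divg_sub (hV : DifferentiableAt ℝ V x) (hW : DifferentiableAt ℝ W x) :
    divg (fun y => V y - W y) x = divg V x - divg W x := by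
  simp only [divg, fderiv_fun_sub hV hW, sub_apply, PiLp.sub_apply, Finset.sum_sub_distrib]

theorem divg_smul {φ : EuclideanSpace ℝ (Fin D) → ℝ} (hφ : DifferentiableAt ℝ φ x)
    (hV : DifferentiableAt ℝ V x) :
    divg (fun y => φ y • V y) x = φ x * divg V x + fderiv ℝ φ x (V x) := by
  have transport : fderiv ℝ φ x (V x)
      = ∑ i, fderiv ℝ φ x (EuclideanSpace.single i 1) * V x i := by
    conv_lhs => rw [← (EuclideanSpace.basisFun (Fin D) ℝ).sum_repr (V x)]
    simp [mul_comm]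
  rw [transport, divg, divg, fderiv_fun_smul hφ hV, Finset.mul_sum, ← Finset.sum_add_distrib]
  simp

theorem divg_const_smul (c : ℝ) (hV : DifferentiableAt ℝ V x) :
    divg (fun y => c • V y) x = c * divg V x := by
  simp [divg_smul (differentiableAt_const c) hV]

theorem divg_const_smul_id (c : ℝ) (x : EuclideanSpace ℝ (Fin D)) :
    divg (fun y => c • y) x = D * c := by
  rw [divg_const_smul c differentiableAt_fun_id, mul_comm]
  simp [divg]

end Divergence

section ProbabilityFlow

variable {D : ℕ}

/-- The velocity field `b - (g² / 2) ∇ log q` of the probability-flow ODE at a fixed time, for the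
drift `b`, the density `q` and the squared diffusion coefficient `gsq = g²`. -/
noncomputable def probFlowVelocity
    (b : EuclideanSpace ℝ (Fin D) → EuclideanSpace ℝ (Fin D)) (gsq : ℝ)
    (q : EuclideanSpace ℝ (Fin D) → ℝ) (x : EuclideanSpace ℝ (Fin D)) :
    EuclideanSpace ℝ (Fin D) :=
  b x - ((1 / 2) * gsq) • gradient (fun y => Real.log (q y)) x

section FixedTime

variable {b : EuclideanSpace ℝ (Fin D) → EuclideanSpace ℝ (Fin D)} {gsq : ℝ}
  {q : EuclideanSpace ℝ (Fin D) → ℝ} {x : EuclideanSpace ℝ (Fin D)}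

theorem differentiableAt_probFlowVelocity (hb : DifferentiableAt ℝ b x)
    (hq : ContDiffAt ℝ 2 q x) (hx : q x ≠ 0) :
    DifferentiableAt ℝ (probFlowVelocity b gsq q) x :=
  hb.fun_sub ((differentiableAt_gradient (hq.log hx)).fun_const_smul _)

theorem divg_probFlowVelocity (hb : DifferentiableAt ℝ b x) (hq : ContDiffAt ℝ 2 q x)
    (hx : q x ≠ 0) :
    divg (probFlowVelocity b gsq q) x
      = divg b x - (1 / 2) * gsq * lap (fun y => Real.log (q y)) x := by
  have hscore := differentiableAt_gradient (hq.log hx)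
  unfold probFlowVelocity
  rw [divg_sub hb (hscore.fun_const_smul _), divg_const_smul _ hscore, lap]

theorem divg_smul_probFlowVelocity (hb : DifferentiableAt ℝ b x) (hq : ContDiffAt ℝ 2 q x)
    (hx : q x ≠ 0) :
    divg (fun y => q y • probFlowVelocity b gsq q y) x
      = divg (fun y => q y • b y) x - (1 / 2) * gsq * lap q x := by
  have hflux : (fun y => q y • probFlowVelocity b gsq q y)
      =ᶠ[nhds x] fun y => q y • b y - ((1 / 2) * gsq) • gradient q y := by
    filter_upwards [hq.eventually (by simp), hq.continuousAt.eventually_ne hx] with y hqy hy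
    rw [probFlowVelocity, smul_sub, smul_comm,
      smul_gradient_log (hqy.differentiableAt two_ne_zero) hy]
  have hgrad := differentiableAt_gradient hq
  rw [divg_congr_of_eventuallyEq hflux, divg_sub ((hq.differentiableAt two_ne_zero).fun_smul hb)
    (hgrad.fun_const_smul _), divg_const_smul _ hgrad, lap]

end FixedTime

variable {p : ℝ → EuclideanSpace ℝ (Fin D) → ℝ} {x : ℝ → EuclideanSpace ℝ (Fin D)} {t : ℝ}

theorem hasDerivAt_log_of_continuity_equation
    {v : EuclideanSpace ℝ (Fin D) → EuclideanSpace ℝ (Fin D)}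
    (hp : DifferentiableAt ℝ (fun q : ℝ × EuclideanSpace ℝ (Fin D) => p q.1 q.2) (t, x t))
    (hpt : p t (x t) ≠ 0) (hv : DifferentiableAt ℝ v (x t))
    (hcont : deriv (fun τ => p τ (x t)) t = -divg (fun y => p t y • v y) (x t))
    (hx : HasDerivAt x (v (x t)) t) :
    HasDerivAt (fun τ => Real.log (p τ (x τ))) (-divg v (x t)) t := by
  have hspace : DifferentiableAt ℝ (p t) (x t) :=
    hp.comp (x t) ((differentiableAt_const t).prodMk differentiableAt_id)
  convert (hasDerivAt_curve_of_differentiableAt_uncurry hp hx).log hpt using 1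
  rw [hcont, divg_smul hspace hv]
  field_simp
  ring

theorem pf_ode_log_density_evolution_general
    {b : ℝ → EuclideanSpace ℝ (Fin D) → EuclideanSpace ℝ (Fin D)} {gsq : ℝ → ℝ}
    (hb : DifferentiableAt ℝ (b t) (x t))
    (hp : DifferentiableAt ℝ (fun q : ℝ × EuclideanSpace ℝ (Fin D) => p q.1 q.2) (t, x t))
    (hpt : ContDiffAt ℝ 2 (p t) (x t)) (hpos : 0 < p t (x t))
    (hFP : deriv (fun τ => p τ (x t)) t
      = -divg (fun y => p t y • b t y) (x t) + (1 / 2) * gsq t * lap (p t) (x t))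
    (hx : HasDerivAt x (probFlowVelocity (b t) (gsq t) (p t) (x t)) t) :
    HasDerivAt (fun τ => Real.log (p τ (x τ)))
      (-divg (b t) (x t) + (1 / 2) * gsq t * lap (fun y => Real.log (p t y)) (x t)) t := by
  have hcont : deriv (fun τ => p τ (x t)) t
      = -divg (fun y => p t y • probFlowVelocity (b t) (gsq t) (p t) y) (x t) := by
    rw [hFP, divg_smul_probFlowVelocity hb hpt hpos.ne']
    ring
  convert hasDerivAt_log_of_continuity_equation hp hpos.ne'
    (differentiableAt_probFlowVelocity hb hpt hpos.ne') hcont hx using 1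
  rw [divg_probFlowVelocity hb hpt hpos.ne']
  ring

end ProbabilityFlow

/-- Density evolution along the probability-flow ODE for a linear-drift
diffusion with noise schedule `(α, σ)`. -/
theorem pf_ode_log_density_evolution {D : ℕ} (hD : 0 < D)
    (α σ : ℝ → ℝ) (hα : ContDiff ℝ (⊤ : ℕ∞) α) (hσ : ContDiff ℝ (⊤ : ℕ∞) σ)
    (hαpos : ∀ t, 0 < α t) (hσpos : ∀ t, 0 < σ t)
    (lam f gsq : ℝ → ℝ)
    (hlam : ∀ t, lam t = Real.log (α t ^ 2 / σ t ^ 2))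
    (hf : ∀ t, f t = deriv (fun u => Real.log (α u)) t)
    (hgsq : ∀ t, gsq t = -(deriv lam t) * σ t ^ 2)
    (p : ℝ → EuclideanSpace ℝ (Fin D) → ℝ)
    (hp : ContDiff ℝ (⊤ : ℕ∞) (fun q : ℝ × EuclideanSpace ℝ (Fin D) => p q.1 q.2))
    (hppos : ∀ t x, 0 < p t x)
    (hFP : ∀ t x, deriv (fun τ => p τ x) t
      = - divg (fun y => p t y • (f t • y)) x + (1 / 2) * gsq t * lap (p t) x)
    (x : ℝ → EuclideanSpace ℝ (Fin D))
    (hx : ∀ t, HasDerivAt x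
      (f t • x t - ((1 / 2) * gsq t) • gradient (fun y => Real.log (p t y)) (x t)) t) :
    ∀ t, deriv (fun τ => Real.log (p τ (x τ))) t
      = -(D : ℝ) * f t + (1 / 2) * gsq t * lap (fun y => Real.log (p t y)) (x t) := by
  intro t
  have hpt : ContDiff ℝ 2 (p t) := (contDiff_infty.mp hp 2).comp (contDiff_prodMk_right t)
  rw [neg_mul, ← divg_const_smul_id (f t) (x t)]
  exact (pf_ode_log_density_evolution_general (b := fun s y => f s • y)
    (differentiableAt_fun_id.fun_const_smul (f t)) (hp.differentiable (by simp) _)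
    hpt.contDiffAt (hppos t (x t)) (hFP t (x t)) (hx t)).deriv
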